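/- Let X be an involutive BE algebra. Then X satisfies both the quantum-Wajsberg axiom (QW): x→((x∧y)∧(z∧x)) = (x→y)∧(x→z) for all x, y, z, and the antisymmetry condition (An): x→y = 1 and y→x = 1 imply x = y, if and only if X is ∨-commutative, i.e., x∨y = y∨x for all x, y ∈ X. (In other words, a quantum-Wajsberg algebra is a Wajsberg algebra if and only if ≤ is antisymmetric.) -/

import Mathlib

/-!
Put `x ⊙ y = (x → y*)*`. In every involutive BE algebra `(x ⊙ y) → z = x → (y → z)`, and
`x ∧ y = y ⊙ (y → x)` lies below both `x` and `y`. The argument runs through the divisibility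
property (`Divisible`): if `x ≤ y` then `x = y ⊙ (y → x)`. Divisibility makes `≤` transitive
(`le_trans_of`) and makes `x ∧ y` the greatest lower bound of `x` and `y` (`le_inf_of`).

Assume (QW) and (An), and let `x ≤ y`. Taking `z = 1` in (QW) gives `x → ((x ∧ y) ∧ x) = x → y = 1`,
so antisymmetry yields `(x ∧ y) ∧ x = x`; hence `x ≤ x ∧ y ≤ x`, which is divisibility. So `∧` is a
meet, thus commutative, and `∨` is commutative by duality.

Conversely, if `∨` is commutative, antisymmetry and divisibility follow from
`(x → y) → y = (y → x) → x` with `x → y = 1`. Since `∧` is then a meet, both sides of (QW) have the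
same lower bounds `w`: by residuation, being below either side says that `w ⊙ x` lies below `y` and `z`.
-/

/-- A bounded involutive BE algebra. -/
class InvBE (X : Type*) where
  imp : X → X → X
  one : X
  zero : X
  be1 : ∀ x : X, imp x x = one
  be2 : ∀ x : X, imp x one = one
  be3 : ∀ x : X, imp one x = x
  be4 : ∀ x y z : X, imp x (imp y z) = imp y (imp x z)
  bound : ∀ x : X, imp zero x = one
  dn : ∀ x : X, imp (imp x zero) zero = x

namespace InvBE

variable {X : Type*} [InvBE X]

/-- Negation: `x* = x → 0`. -/
def neg (x : X) : X := imp x zero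

/-- `x ∨ y = (x → y) → y`. -/
def sup (x y : X) : X := imp (imp x y) y

/-- `x ∧ y = ((x* → y*) → y*)*`. -/
def inf (x y : X) : X := neg (imp (imp (neg x) (neg y)) (neg y))

/-- `x ≤ y` iff `x → y = 1`. -/
def le (x y : X) : Prop := imp x y = one

/-- `x ≤_Q y` iff `x = x ∧ y`. -/
def leQ (x y : X) : Prop := x = inf x y

end InvBE

namespace InvBE

variable {X : Type*} [InvBE X]

/-- The product `x ⊙ y = (x → y*)*`, left adjoint to implication. -/
def prod (x y : X) : X := neg (imp x (neg y))

/-- `x ≤ y` implies `x = y ⊙ (y → x)`. -/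
def Divisible (X : Type*) [InvBE X] : Prop :=
  ∀ x y : X, imp x y = one → prod y (imp y x) = x

theorem neg_neg' (x : X) : neg (neg x) = x := dn x

theorem imp_neg_comm (x y : X) : imp x (neg y) = imp y (neg x) := be4 x y zero

theorem contra (x y : X) : imp (neg y) (neg x) = imp x y := by
  rw [imp_neg_comm, neg_neg']

theorem neg_one' : neg (one : X) = zero := be3 zero

theorem prod_comm (x y : X) : prod x y = prod y x := by
  unfold prod; rw [imp_neg_comm]

theorem prod_imp (x y z : X) : imp (prod x y) z = imp x (imp y z) := by
  unfold prod
  rw [← contra, neg_neg', be4, contra]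

theorem prod_one' (x : X) : prod x one = x := by
  unfold prod; rw [neg_one']; exact dn x

theorem inf_eq (x y : X) : inf x y = prod y (imp y x) := by
  unfold inf
  rw [prod_comm, prod, contra]

theorem inf_le_left' (x y : X) : imp (inf x y) x = one := by
  rw [inf_eq, prod_comm, prod_imp, be1]

theorem inf_le_right' (x y : X) : imp (inf x y) y = one := by
  rw [inf_eq, prod_comm, prod_imp, be1, be2]

theorem inf_one (x : X) : inf x one = x := by
  rw [inf_eq, be3, prod_comm, prod_one']

theorem one_inf (x : X) : inf one x = x := by
  rw [inf_eq, be2, prod_one']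

theorem neg_sup_eq (x y : X) : neg (sup x y) = inf (neg x) (neg y) := by
  unfold inf sup; rw [neg_neg', neg_neg']

theorem le_trans_of (H : Divisible X) {x y z : X} (h : imp x y = one) (h' : imp y z = one) :
    imp x z = one := by
  rw [← H x y h, prod_comm, prod_imp, h', be2]

theorem le_inf_of (H : Divisible X) {w x y : X} (hx : imp w x = one) (hy : imp w y = one) :
    imp w (inf x y) = one := by
  have h1 : imp (imp y w) (imp y x) = one := by
    rw [← prod_imp, prod_comm, H w y hy, hx]
  have h2 : imp (imp y x) (imp y (inf x y)) = one := by
    rw [← prod_imp, prod_comm, ← inf_eq, be1]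
  have h3 := le_trans_of H h1 h2
  rwa [← prod_imp, prod_comm, H w y hy] at h3

theorem le_inf_iff_of (H : Divisible X) (w x y : X) :
    imp w (inf x y) = one ↔ imp w x = one ∧ imp w y = one :=
  ⟨fun h => ⟨le_trans_of H h (inf_le_left' x y), le_trans_of H h (inf_le_right' x y)⟩,
    fun h => le_inf_of H h.1 h.2⟩

theorem divisible_of_qw
    (qw : ∀ x y z : X, imp x (inf (inf x y) (inf z x)) = inf (imp x y) (imp x z))
    (an : ∀ x y : X, imp x y = one → imp y x = one → x = y) : Divisible X := by
  intro x y h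
  have h1 := qw x y one
  rw [one_inf, be2, inf_one, h] at h1
  have h2 : x = inf (inf x y) x := an _ _ h1 (inf_le_right' _ _)
  have h3 : imp x (inf x y) = one := by
    have := inf_le_left' (inf x y) x
    rwa [← h2] at this
  rw [← inf_eq]
  exact an _ _ (inf_le_left' x y) h3

theorem antisymm_of_comm (hc : ∀ x y : X, sup x y = sup y x) (x y : X)
    (h : imp x y = one) (h' : imp y x = one) : x = y := by
  have := hc x y
  unfold sup at this
  rw [h, h', be3, be3] at this
  exact this.symm

theorem divisible_of_comm (hc : ∀ x y : X, sup x y = sup y x) : Divisible X := by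
  intro x y h
  have h1 := hc (neg x) (neg y)
  have h2 : sup (neg y) (neg x) = neg x := by
    unfold sup; rw [contra, h, be3]
  rw [← inf_eq, ← neg_neg' x, ← neg_neg' y, ← neg_sup_eq, h1, h2]

end InvBE

open InvBE in
theorem stmt_19 {X : Type*} [InvBE X] :
    ((∀ x y z : X, imp x (inf (inf x y) (inf z x)) = inf (imp x y) (imp x z)) ∧
     (∀ x y : X, imp x y = one → imp y x = one → x = y)) ↔
    (∀ x y : X, sup x y = sup y x) := by
  constructor
  · rintro ⟨qw, an⟩ x y
    have H := divisible_of_qw qw an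
    have hcomm : ∀ a b : X, inf a b = inf b a := fun a b =>
      an _ _ (le_inf_of H (inf_le_right' a b) (inf_le_left' a b))
        (le_inf_of H (inf_le_right' b a) (inf_le_left' b a))
    rw [← neg_neg' (sup x y), neg_sup_eq, hcomm, ← neg_sup_eq, neg_neg']
  · intro hc
    have H := divisible_of_comm hc
    have an := antisymm_of_comm hc
    refine ⟨fun x y z => ?_, an⟩
    have key : ∀ w : X, imp w (imp x (inf (inf x y) (inf z x))) = one ↔
        imp w (inf (imp x y) (imp x z)) = one := by
      intro w
      have hx : imp (prod w x) x = one := by rw [prod_imp, be1, be2]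
      rw [← prod_imp, le_inf_iff_of H, le_inf_iff_of H, le_inf_iff_of H, le_inf_iff_of H,
        ← prod_imp, ← prod_imp]
      tauto
    exact an _ _ ((key _).1 (be1 _)) ((key _).2 (be1 _))
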